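/- arXiv:1011.4675 — 4 statements merged into one kernel-verified Lean document; each statement's English description precedes it below -/
import Mathlib

section
/- Let Λ be a nonempty finite set of even cardinality. Suppose the nonlinear term φ is symmetric, i.e. φ(K) = φ(Λ) − φ(Λ \ K) for every subset K ⊆ Λ, and suppose φ(Λ) = −2·u₀ − ∑_{j∈Λ} u₁(j). Then the alternating sum ∑_{K ⊆ Λ} (−1)^{|Λ \ K|} · Φ(K) equals 0. (This is the sufficient condition of Theorem 1 for the determinant of the projectivity matrix to vanish, expressed through the characterization of Lemma 1.) -/
open Finset Real

/-- Complementation within `s` is an involution of the subsets of `s`. -/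
lemma sum_powerset_sdiff {ι M : Type*} [DecidableEq ι] [AddCommMonoid M] (s : Finset ι)
    (f : Finset ι → M) : ∑ K ∈ s.powerset, f (s \ K) = ∑ K ∈ s.powerset, f K := by
  refine Finset.sum_nbij' (s \ ·) (s \ ·) ?_ ?_ ?_ ?_ ?_ <;> simp +contextual

/-- The logistic function satisfies `σ x + σ (-x) = 1`. -/
lemma exp_div_one_add_exp_add_neg (x : ℝ) :
    Real.exp x / (1 + Real.exp x) + Real.exp (-x) / (1 + Real.exp (-x)) = 1 := by
  have hx := Real.exp_pos x
  rw [Real.exp_neg]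
  field_simp
  ring

/-- In a set of even cardinality, complementary subsets have the same parity. -/
lemma neg_one_pow_card_sdiff {ι : Type*} [DecidableEq ι] {s K : Finset ι}
    (hs : Even s.card) (hK : K ⊆ s) : (-1 : ℝ) ^ (s \ K).card = (-1) ^ K.card := by
  have h := Finset.card_sdiff_add_card_eq_card hK
  rw [← h, Nat.even_add] at hs
  exact neg_one_pow_congr hs

/-- If the nonlinear term `φ` is symmetric (`φ K = φ Λ - φ (Λ \ K)` for all
`K ⊆ Λ`) and `φ Λ = -2·u₀ - ∑_{j∈Λ} u₁ j`, with `Λ` nonempty of even cardinality, then the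
alternating sum `∑_{K ⊆ Λ} (-1)^{|Λ \ K|} · Φ K` vanishes. -/
theorem alternating_sum_eq_zero_of_symmetric
    {ι : Type*} [DecidableEq ι] (Λ : Finset ι) (hne : Λ.Nonempty)
    (heven : Even Λ.card) (u₀ : ℝ) (u₁ : ι → ℝ) (φ : Finset ι → ℝ)
    (Φ : Finset ι → ℝ)
    (hΦ : ∀ K ⊆ Λ, Φ K =
      Real.exp (u₀ + ∑ j ∈ K, u₁ j + φ K) /
        (1 + Real.exp (u₀ + ∑ j ∈ K, u₁ j + φ K)))
    (hsym : ∀ K ⊆ Λ, φ K = φ Λ - φ (Λ \ K))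
    (hφΛ : φ Λ = -2 * u₀ - ∑ j ∈ Λ, u₁ j) :
    ∑ K ∈ Λ.powerset, (-1 : ℝ) ^ (Λ \ K).card * Φ K = 0 := by
  have hadd : ∀ K ⊆ Λ, Φ K + Φ (Λ \ K) = 1 := by
    intro K hK
    have hneg : u₀ + ∑ j ∈ Λ \ K, u₁ j + φ (Λ \ K) = -(u₀ + ∑ j ∈ K, u₁ j + φ K) := by
      linarith [hsym K hK, Finset.sum_sdiff (f := u₁) hK]
    rw [hΦ K hK, hΦ _ Finset.sdiff_subset, hneg]
    exact exp_div_one_add_exp_add_neg _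
  have hsigns : ∑ K ∈ Λ.powerset, (-1 : ℝ) ^ K.card = 0 := by
    exact_mod_cast Finset.sum_powerset_neg_one_pow_card_of_nonempty hne
  have hrefl : ∑ K ∈ Λ.powerset, (-1 : ℝ) ^ (Λ \ K).card * Φ K =
      ∑ K ∈ Λ.powerset, (-1 : ℝ) ^ K.card * Φ (Λ \ K) := by
    rw [← sum_powerset_sdiff Λ fun K => (-1 : ℝ) ^ K.card * Φ (Λ \ K)]
    refine Finset.sum_congr rfl fun K hK => ?_
    rw [Finset.sdiff_sdiff_eq_self (Finset.mem_powerset.mp hK)]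
  have hdouble : ∑ K ∈ Λ.powerset, (-1 : ℝ) ^ (Λ \ K).card * Φ K +
      ∑ K ∈ Λ.powerset, (-1 : ℝ) ^ K.card * Φ (Λ \ K) = 0 := by
    rw [← Finset.sum_add_distrib, ← hsigns]
    refine Finset.sum_congr rfl fun K hK => ?_
    have hK := Finset.mem_powerset.mp hK
    rw [neg_one_pow_card_sdiff heven hK, ← mul_add, hadd K hK, mul_one]
  linarith
end

section
/- Let Λ be a nonempty finite linearly ordered set and let M be the projectivity matrix associated with Φ. Then det M = 0 if and only if ∑_{K ⊆ Λ} (−1)^{|Λ \ K|} · Φ(K) = 0. (Lemma 1, the determinant characterization of the projectivity matrix.) -/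
open Finset Real

/-- Pairing a vector with the indicator of two distinct indices adds the two entries. -/
lemma sum_ite_eq_or_eq_mul {α R : Type*} [Fintype α] [DecidableEq α] [NonAssocSemiring R]
    {a b : α} (hab : a ≠ b) (v : α → R) :
    ∑ x, (if x = a ∨ x = b then 1 else 0) * v x = v a + v b := by
  simp only [ite_mul, one_mul, zero_mul]
  rw [← Finset.sum_filter, ← Finset.sum_pair hab]
  congr 1
  ext x
  simp

/-- A function on finsets that changes sign whenever the minimum is removed is determined by
its value at the empty set. -/
lemma eq_neg_one_pow_card_mul_of_add_erase_min {ι R : Type*} [LinearOrder ι] [Ring R]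
    {v : Finset ι → R} (hv : ∀ K (hK : K.Nonempty), v K + v (K.erase (K.min' hK)) = 0)
    (K : Finset ι) : v K = (-1) ^ K.card * v ∅ := by
  induction K using Finset.strongInduction with
  | H K ih =>
    rcases K.eq_empty_or_nonempty with rfl | hK
    · simp
    · have hmem := K.min'_mem hK
      rw [eq_neg_of_add_eq_zero_left (hv K hK), ih _ (Finset.erase_ssubset hmem),
        ← Finset.card_erase_add_one hmem, pow_succ]
      simp

lemma sum_neg_one_pow_card_compl_mul {ι R : Type*} [Fintype ι] [DecidableEq ι] [CommRing R]
    (Φ : Finset ι → R) :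
    ∑ K : Finset ι, (-1) ^ Kᶜ.card * Φ K =
      (-1) ^ Fintype.card ι * ∑ K : Finset ι, (-1) ^ K.card * Φ K := by
  rw [Finset.mul_sum]
  refine Finset.sum_congr rfl fun K _ => ?_
  rw [← Finset.card_compl_add_card K, pow_add, ← mul_assoc, mul_assoc ((-1) ^ Kᶜ.card),
    ← mul_pow]
  simp

/-- Lemma 1: the determinant of the projectivity matrix `M` vanishes iff the
alternating sum `∑_{K ⊆ Λ} (-1)^{|Λ \ K|} Φ K` vanishes. Here the nonempty finite linearly
ordered set `Λ` is formalised as the finite linearly ordered nonempty type `ι`, and its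
subsets as `Finset ι` (so `Λ \ K` is `Kᶜ`). -/
theorem det_projectivity_matrix_eq_zero_iff
    {ι : Type*} [Fintype ι] [LinearOrder ι] [Nonempty ι]
    (u₀ : ℝ) (u₁ : ι → ℝ) (φ : Finset ι → ℝ) (Φ : Finset ι → ℝ)
    (hΦ : ∀ K : Finset ι, Φ K =
      Real.exp (u₀ + ∑ j ∈ K, u₁ j + φ K) /
        (1 + Real.exp (u₀ + ∑ j ∈ K, u₁ j + φ K)))
    (M : Matrix (Finset ι) (Finset ι) ℝ)
    (hM : ∀ K K' : Finset ι,
      M K K' = if hK : K.Nonempty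
        then (if K' = K ∨ K' = K.erase (K.min' hK) then 1 else 0)
        else Φ K') :
    M.det = 0 ↔ ∑ K : Finset ι, (-1 : ℝ) ^ Kᶜ.card * Φ K = 0 := by
  have mulVec_nonempty (v : Finset ι → ℝ) (K : Finset ι) (hK : K.Nonempty) :
      M.mulVec v K = v K + v (K.erase (K.min' hK)) := by
    have hne : K ≠ K.erase (K.min' hK) := (Finset.erase_ssubset (K.min'_mem hK)).ne'
    simp only [Matrix.mulVec, dotProduct, hM, hK, dite_true]
    exact sum_ite_eq_or_eq_mul hne v
  have mulVec_empty (v : Finset ι → ℝ) : M.mulVec v ∅ = ∑ K, Φ K * v K := by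
    simp [Matrix.mulVec, dotProduct, hM]
  rw [sum_neg_one_pow_card_compl_mul, mul_eq_zero_iff_left (by simp),
    ← Matrix.exists_mulVec_eq_zero_iff]
  constructor
  · rintro ⟨v, hv, hMv⟩
    have hpow := eq_neg_one_pow_card_mul_of_add_erase_min (v := v) fun K hK => by
      rw [← mulVec_nonempty, hMv, Pi.zero_apply]
    have hv₀ : v ∅ ≠ 0 := fun h => hv (funext fun K => by rw [hpow, h, mul_zero, Pi.zero_apply])
    refine (mul_eq_zero_iff_right hv₀).1 ?_
    rw [← Pi.zero_apply (M := fun _ : Finset ι => ℝ) ∅, ← hMv, mulVec_empty, Finset.sum_mul]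
    refine Finset.sum_congr rfl fun K _ => ?_
    rw [hpow K]
    ring
  · intro h
    refine ⟨fun K => (-1) ^ K.card, fun h₀ => by simpa using congrFun h₀ ∅, ?_⟩
    funext K
    rcases K.eq_empty_or_nonempty with rfl | hK
    · simpa [mulVec_empty, mul_comm] using h
    · rw [mulVec_nonempty _ K hK, ← Finset.card_erase_add_one (K.min'_mem hK), pow_succ]
      simp
end

section
/- Let Λ be a finite set and suppose the nonlinear term φ is symmetric, i.e. φ(K) = φ(Λ) − φ(Λ \ K) for every subset K ⊆ Λ. Then for every subset K ⊆ Λ, the equality u₀ + (∑_{j∈Λ} u₁(j))/2 + φ(Λ)/2 = 0 holds if and only if Φ(K) + Φ(Λ \ K) = 1. (Lemma 3.) -/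
open Finset Real

/-- The logistic values at `a` and `b` sum to `1` exactly when `a + b = 0`. -/
theorem logistic_add_logistic_eq_one_iff (a b : ℝ) :
    Real.exp a / (1 + Real.exp a) + Real.exp b / (1 + Real.exp b) = 1 ↔ a + b = 0 := by
  have ha : 1 + Real.exp a ≠ 0 := by positivity
  have hb : 1 + Real.exp b ≠ 0 := by positivity
  rw [div_add_div _ _ ha hb, div_eq_one_iff_eq (mul_ne_zero ha hb), ← Real.exp_eq_one_iff,
    Real.exp_add]
  constructor <;> intro h <;> linarith

/-- Lemma 3: assuming the nonlinear term `φ` is symmetric, for every `K ⊆ Λ`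
one has `u₀ + (∑_{j∈Λ} u₁ j)/2 + φ Λ / 2 = 0` iff `Φ K + Φ (Λ \ K) = 1`. -/
theorem potential_eq_zero_iff_prob_sum_one
    {ι : Type*} [DecidableEq ι] (Λ : Finset ι) (u₀ : ℝ) (u₁ : ι → ℝ)
    (φ : Finset ι → ℝ) (Φ : Finset ι → ℝ)
    (hΦ : ∀ K ⊆ Λ, Φ K =
      Real.exp (u₀ + ∑ j ∈ K, u₁ j + φ K) /
        (1 + Real.exp (u₀ + ∑ j ∈ K, u₁ j + φ K)))
    (hsym : ∀ K ⊆ Λ, φ K = φ Λ - φ (Λ \ K)) :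
    ∀ K ⊆ Λ,
      (u₀ + (∑ j ∈ Λ, u₁ j) / 2 + φ Λ / 2 = 0 ↔ Φ K + Φ (Λ \ K) = 1) := by
  intro K hK
  rw [hΦ K hK, hΦ (Λ \ K) sdiff_subset, logistic_add_logistic_eq_one_iff]
  have hsum := Finset.sum_sdiff (f := u₁) hK
  have hφ := hsym K hK
  constructor <;> intro h <;> linarith
end

section
/- Let Λ be a nonempty finite linearly ordered set of even cardinality. Suppose the nonlinear term φ is symmetric, i.e. φ(K) = φ(Λ) − φ(Λ \ K) for every subset K ⊆ Λ, and suppose u₀ + (∑_{j∈Λ} u₁(j))/2 + φ(Λ)/2 = 0. Then the determinant of the projectivity matrix M associated with Φ is zero. (Theorem 1 stated in determinant form, combining the symmetry condition with Lemmas 1–3.) -/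
open Finset Real

/-- The logistic function takes values summing to `1` at opposite arguments. -/
lemma exp_div_one_add_exp_add_eq_one {x y : ℝ} (h : x + y = 0) :
    Real.exp x / (1 + Real.exp x) + Real.exp y / (1 + Real.exp y) = 1 := by
  have hy : Real.exp x * Real.exp y = 1 := by rw [← Real.exp_add, h, Real.exp_zero]
  have hx0 := Real.exp_pos x
  have hy0 := Real.exp_pos y
  field_simp
  linear_combination hy

/-- On a nonempty set of even cardinality, the alternating sum over all subsets of a function
whose values at complementary subsets sum to `1` vanishes. -/
lemma sum_neg_one_pow_card_mul_eq_zero {ι : Type*} [Fintype ι] [DecidableEq ι] [Nonempty ι]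
    (heven : Even (Fintype.card ι)) {f : Finset ι → ℝ} (hf : ∀ K, f K + f Kᶜ = 1) :
    ∑ K, (-1 : ℝ) ^ #K * f K = 0 := by
  have hcompl : ∑ K, (-1 : ℝ) ^ #K * f K = ∑ K, (-1 : ℝ) ^ #K * f Kᶜ := by
    refine Fintype.sum_equiv (Equiv.mk compl compl compl_compl compl_compl) _ _ fun K => ?_
    have hcard : Even (#K + #Kᶜ) := by rwa [card_add_card_compl]
    have hpow : (-1 : ℝ) ^ #K = (-1) ^ #Kᶜ := neg_one_pow_congr (Nat.even_add.mp hcard)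
    simp [hpow]
  have hzero : ∑ K : Finset ι, (-1 : ℝ) ^ #K = 0 := by
    have h := Finset.sum_powerset_neg_one_pow_card_of_nonempty (univ_nonempty (α := ι))
    rw [powerset_univ] at h
    exact_mod_cast h
  have hadd : ∑ K, (-1 : ℝ) ^ #K * f K + ∑ K, (-1 : ℝ) ^ #K * f Kᶜ = 0 := by
    simp_rw [← sum_add_distrib, ← mul_add, hf, mul_one, hzero]
  linarith

/-- Theorem 1, determinant form: if the nonlinear term `φ` is symmetric and
`u₀ + (∑_{j∈Λ} u₁ j)/2 + φ Λ / 2 = 0`, then the determinant of the projectivity matrix `M`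
vanishes. The nonempty finite linearly ordered set `Λ`, of even cardinality, is formalised
as the finite linearly ordered nonempty type `ι` with `Even (Fintype.card ι)`, and its
subsets as `Finset ι` (so `Λ` is `univ` and `Λ \ K` is `Kᶜ`). -/
theorem det_projectivity_matrix_eq_zero_of_symmetric
    {ι : Type*} [Fintype ι] [LinearOrder ι] [Nonempty ι]
    (heven : Even (Fintype.card ι))
    (u₀ : ℝ) (u₁ : ι → ℝ) (φ : Finset ι → ℝ) (Φ : Finset ι → ℝ)
    (hΦ : ∀ K : Finset ι, Φ K =
      Real.exp (u₀ + ∑ j ∈ K, u₁ j + φ K) /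
        (1 + Real.exp (u₀ + ∑ j ∈ K, u₁ j + φ K)))
    (hsym : ∀ K : Finset ι, φ K = φ Finset.univ - φ Kᶜ)
    (hpot : u₀ + (∑ j, u₁ j) / 2 + φ Finset.univ / 2 = 0)
    (M : Matrix (Finset ι) (Finset ι) ℝ)
    (hM : ∀ K K' : Finset ι,
      M K K' = if hK : K.Nonempty
        then (if K' = K ∨ K' = K.erase (K.min' hK) then 1 else 0)
        else Φ K') :
    M.det = 0 := by
  have hΦcompl : ∀ K, Φ K + Φ Kᶜ = 1 := fun K => by
    rw [hΦ, hΦ]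
    apply exp_div_one_add_exp_add_eq_one
    have hsum := sum_add_sum_compl K u₁
    linear_combination 2 * hpot + hsum + hsym K
  rw [← Matrix.exists_mulVec_eq_zero_iff]
  refine ⟨fun K => (-1) ^ #K, fun h => by simpa using congrFun h ∅, ?_⟩
  ext K
  simp only [Matrix.mulVec, dotProduct, Pi.zero_apply, hM]
  by_cases hK : K.Nonempty
  · have hmem := K.min'_mem hK
    have hne : K ≠ K.erase (K.min' hK) := fun h => notMem_erase (K.min' hK) K (h ▸ hmem)
    have hfilter : univ.filter (fun K' => K' = K ∨ K' = K.erase (K.min' hK))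
        = {K, K.erase (K.min' hK)} := by
      ext
      simp
    simp only [hK, dite_true, ite_mul, one_mul, zero_mul]
    rw [← sum_filter, hfilter, sum_pair hne, ← card_erase_add_one hmem, pow_succ]
    ring
  · simp only [hK, dite_false, mul_comm (Φ _)]
    exact sum_neg_one_pow_card_mul_eq_zero heven hΦcompl
end
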